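/- arXiv:1702.00575 — 6 statements merged into one kernel-verified Lean document; each statement's English description precedes it below -/
import Mathlib

section
/- Let m ≥ 1, let ρ_0, …, ρ_{m−1} be qubit states, let S be their m×3 Bloch matrix, and let w ∈ ℝ^m. Then Tr[(Σ_x w_x ρ_x)₊], the sum of the positive eigenvalues of the Hermitian 2×2 matrix Σ_x w_x ρ_x, equals max(0, Σ_x w_x, ½ Σ_x w_x + ‖Sᵀw‖₂), where ‖·‖₂ denotes the Euclidean norm on ℝ³. -/
open Matrix Finset
open scoped ComplexOrder

/-- The Pauli matrices σ₁, σ₂, σ₃. -/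
noncomputable def pauli : Fin 3 → Matrix (Fin 2) (Fin 2) ℂ :=
  ![!![0, 1; 1, 0], !![0, -Complex.I; Complex.I, 0], !![1, 0; 0, -1]]

/-! A Hermitian 2×2 matrix `A` has eigenvalues `tr A / 2 ± ‖r‖`, where `r` is its Bloch vector:
expanding `A` in the Pauli basis gives `det A = (tr A / 2)² - ‖r‖²`, so `‖r‖` is half the
eigenvalue gap. The positive parts of two reals `a`, `b` sum to the largest of `0`, `a + b`, `a`
and `b`. For `A = ∑ x, w x • ρ x` with all `ρ x` of trace one, linearity gives `tr A = ∑ x, w x`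
and `r = Sᵀ w`. -/

theorem sup_zero_add_sup_zero {α : Type*} [Lattice α] [AddCommGroup α] [AddLeftMono α]
    (a b : α) : a ⊔ 0 + b ⊔ 0 = 0 ⊔ ((a + b) ⊔ (a ⊔ b)) := by
  simp only [sup_add, add_sup, add_zero, zero_add]
  ac_rfl

theorem isSelfAdjoint_trace_mul {n R : Type*} [Fintype n] [NonUnitalCommSemiring R] [StarRing R]
    {A B : Matrix n n R} (hA : A.IsHermitian) (hB : B.IsHermitian) :
    IsSelfAdjoint (A * B).trace := by
  rw [IsSelfAdjoint, ← trace_conjTranspose, conjTranspose_mul, hA.eq, hB.eq, trace_mul_comm]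

theorem isHermitian_pauli (k : Fin 3) : (pauli k).IsHermitian := by
  ext i j
  fin_cases k <;> fin_cases i <;> fin_cases j <;> simp [pauli]

theorem det_eq_trace_sq_sub_sum_trace_mul_pauli_sq (A : Matrix (Fin 2) (Fin 2) ℂ) :
    A.det = (A.trace / 2) ^ 2 - ∑ k, ((A * pauli k).trace / 2) ^ 2 := by
  simp only [pauli, det_fin_two, trace_fin_two, mul_apply, Fin.sum_univ_two, Fin.sum_univ_three,
    of_apply, Matrix.cons_val]
  linear_combination (A 0 1 - A 1 0) ^ 2 / 4 * Complex.I_sq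

/-- The Bloch vector `(½ Re Tr[A σₖ])ₖ` of a 2×2 matrix `A`: the traceless part of a Hermitian `A`
in Pauli coordinates. The traces are then already real; taking real parts makes the Bloch vector
a real-linear map on all matrices. -/
noncomputable def blochVector : Matrix (Fin 2) (Fin 2) ℂ →ₗ[ℝ] EuclideanSpace ℝ (Fin 3) where
  toFun A := WithLp.toLp 2 fun k ↦ (A * pauli k).trace.re / 2
  map_add' A B := by
    ext k
    simp [add_mul, add_div]
  map_smul' c A := by
    ext k
    simp [mul_div_assoc]

theorem blochVector_apply (A : Matrix (Fin 2) (Fin 2) ℂ) (k : Fin 3) :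
    blochVector A k = (A * pauli k).trace.re / 2 :=
  rfl

theorem transpose_mulVec_apply_eq_blochVector {ι : Type*} [Fintype ι]
    {ρ : ι → Matrix (Fin 2) (Fin 2) ℂ} {S : Matrix ι (Fin 3) ℝ}
    (hS : ∀ x k, S x k = (ρ x * pauli k).trace.re / 2) (w : ι → ℝ) (k : Fin 3) :
    (Sᵀ *ᵥ w) k = blochVector (∑ x, (w x : ℂ) • ρ x) k := by
  simp only [Complex.coe_smul, map_sum, map_smul, WithLp.ofLp_sum, WithLp.ofLp_smul,
    Finset.sum_apply, Pi.smul_apply, smul_eq_mul, blochVector_apply, ← hS, mulVec, dotProduct,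
    transpose_apply, mul_comm]

theorem ofReal_blochVector_apply {A : Matrix (Fin 2) (Fin 2) ℂ} (hA : A.IsHermitian)
    (k : Fin 3) : (blochVector A k : ℂ) = (A * pauli k).trace / 2 := by
  have hreal : ((A * pauli k).trace.re : ℂ) = (A * pauli k).trace :=
    Complex.conj_eq_iff_re.mp (isSelfAdjoint_trace_mul hA (isHermitian_pauli k))
  rw [blochVector_apply, Complex.ofReal_div, hreal, Complex.ofReal_ofNat]

theorem ofReal_norm_blochVector_sq {A : Matrix (Fin 2) (Fin 2) ℂ} (hA : A.IsHermitian) :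
    (‖blochVector A‖ ^ 2 : ℂ) = (A.trace / 2) ^ 2 - A.det := by
  have hnorm : (‖blochVector A‖ ^ 2 : ℂ) = ∑ k, ((A * pauli k).trace / 2) ^ 2 := by
    simp only [← ofReal_blochVector_apply hA]
    exact_mod_cast EuclideanSpace.real_norm_sq_eq (blochVector A)
  rw [hnorm, det_eq_trace_sq_sub_sum_trace_mul_pauli_sq, sub_sub_cancel]

theorem norm_blochVector_eq_abs_sub_div_two {A : Matrix (Fin 2) (Fin 2) ℂ} (hA : A.IsHermitian) :
    ‖blochVector A‖ = |hA.eigenvalues 1 - hA.eigenvalues 0| / 2 := by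
  have hsq : ‖blochVector A‖ ^ 2 = ((hA.eigenvalues 1 - hA.eigenvalues 0) / 2) ^ 2 := by
    have h := ofReal_norm_blochVector_sq hA
    rw [hA.trace_eq_sum_eigenvalues, hA.det_eq_prod_eigenvalues, Fin.sum_univ_two,
      Fin.prod_univ_two] at h
    apply Complex.ofReal_injective
    push_cast
    linear_combination h
  rw [← abs_norm, (sq_eq_sq_iff_abs_eq_abs _ _).mp hsq, abs_div, abs_two]

theorem re_trace_eq_sum_eigenvalues {n 𝕜 : Type*} [Fintype n] [DecidableEq n] [RCLike 𝕜]
    {A : Matrix n n 𝕜} (hA : A.IsHermitian) :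
    RCLike.re A.trace = ∑ i, hA.eigenvalues i := by
  simp [hA.trace_eq_sum_eigenvalues]

theorem max_eigenvalues_eq {A : Matrix (Fin 2) (Fin 2) ℂ} (hA : A.IsHermitian) :
    max (hA.eigenvalues 0) (hA.eigenvalues 1) = A.trace.re / 2 + ‖blochVector A‖ := by
  rw [norm_blochVector_eq_abs_sub_div_two hA, ← RCLike.re_eq_complex_re,
    re_trace_eq_sum_eigenvalues hA, Fin.sum_univ_two,
    sup_eq_half_smul_add_add_abs_sub' ℝ, smul_eq_mul]
  ring

theorem sum_max_eigenvalues_zero_eq {A : Matrix (Fin 2) (Fin 2) ℂ} (hA : A.IsHermitian) :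
    ∑ i, max (hA.eigenvalues i) 0 =
      max 0 (max A.trace.re (A.trace.re / 2 + ‖blochVector A‖)) := by
  rw [← max_eigenvalues_eq hA, ← RCLike.re_eq_complex_re, re_trace_eq_sum_eigenvalues hA,
    Fin.sum_univ_two, Fin.sum_univ_two, sup_zero_add_sup_zero]

theorem stmt3_general {ι : Type*} [Fintype ι]
    (ρ : ι → Matrix (Fin 2) (Fin 2) ℂ) (hρ : ∀ x, (ρ x).trace = 1)
    (S : Matrix ι (Fin 3) ℝ) (hS : ∀ x k, S x k = (ρ x * pauli k).trace.re / 2)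
    (w : ι → ℝ) (A : Matrix (Fin 2) (Fin 2) ℂ) (hAdef : A = ∑ x, (w x : ℂ) • ρ x)
    (hA : A.IsHermitian) :
    ∑ i, max (hA.eigenvalues i) 0 =
      max 0 (max (∑ x, w x)
        ((∑ x, w x) / 2 + Real.sqrt (∑ k, ((Sᵀ *ᵥ w) k) ^ 2))) := by
  have htrace : A.trace.re = ∑ x, w x := by
    simp [hAdef, trace_sum, hρ]
  have hnorm : ‖blochVector A‖ = Real.sqrt (∑ k, ((Sᵀ *ᵥ w) k) ^ 2) := by
    simp only [EuclideanSpace.norm_eq, Real.norm_eq_abs, sq_abs, hAdef,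
      transpose_mulVec_apply_eq_blochVector hS]
  rw [sum_max_eigenvalues_zero_eq hA, htrace, hnorm]

/-- for qubit states ρ_x with Bloch matrix S and w ∈ ℝ^m, the sum of
the positive eigenvalues of ∑_x w_x ρ_x equals
max(0, ∑_x w_x, ½ ∑_x w_x + ‖Sᵀw‖₂). -/
theorem stmt3 (m : ℕ) (hm : 1 ≤ m)
    (ρ : Fin m → Matrix (Fin 2) (Fin 2) ℂ)
    (hρ : ∀ x, (ρ x).PosSemidef ∧ (ρ x).trace = 1)
    (S : Matrix (Fin m) (Fin 3) ℝ)
    (hS : ∀ x k, S x k = ((ρ x * pauli k).trace).re / 2)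
    (w : Fin m → ℝ)
    (A : Matrix (Fin 2) (Fin 2) ℂ)
    (hAdef : A = ∑ x, (w x : ℂ) • ρ x)
    (hA : A.IsHermitian) :
    ∑ i, max (hA.eigenvalues i) 0 =
      max 0 (max (∑ x, w x)
        ((∑ x, w x) / 2 + Real.sqrt (∑ k, ((Sᵀ *ᵥ w) k) ^ 2))) :=
  stmt3_general ρ (fun x ↦ (hρ x).2) S hS w A hAdef hA
end

section
/- Let m, k ≥ 1, let S be an m×k real matrix, and let c ∈ ℝ^m. Then { p ∈ ℝ^m : ∀ w ∈ ℝ^m, ⟨p − c, w⟩ ≤ ‖Sᵀw‖₂ } = { c + S v : v ∈ ℝ^k, ‖v‖₂ ≤ 1 }, where ⟨·,·⟩ is the Euclidean inner product and ‖·‖₂ the Euclidean norm. (This identifies the set cut out by the family of supporting hyperplane inequalities p^T w ≤ W with the hyper-ellipsoid c + S·(closed unit ball).) -/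
open Matrix Finset

/-! If `re ⟪p - c, w⟫ ≤ ‖A w‖` for all `w`, then `⟪p - c, w⟫` depends only on `A w`, and
`A w ↦ ⟪p - c, w⟫` is a functional of norm at most one on the range of `A`. Hahn–Banach extends it
to the whole space and Riesz represents the extension by a vector `v` of the unit ball, so
`⟪p - c, w⟫ = ⟪v, A w⟫`. When `A` is adjoint to `T`, this says `p - c = T v`. The converse inclusion
is the Cauchy–Schwarz inequality. -/

section HahnBanach

variable {𝕜 E F : Type*} [RCLike 𝕜] [AddCommGroup E] [Module 𝕜 E]

lemma norm_le_seminorm_of_forall_re_le {φ : Module.Dual 𝕜 E} {q : Seminorm 𝕜 E}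
    (h : ∀ w, RCLike.re (φ w) ≤ q w) (w : E) : ‖φ w‖ ≤ q w := by
  obtain ⟨a, ha, haw⟩ := RCLike.exists_norm_eq_mul_self (φ w)
  calc ‖φ w‖ = RCLike.re (φ (a • w)) := by
        rw [map_smul, smul_eq_mul, ← haw, RCLike.ofReal_re]
    _ ≤ q (a • w) := h (a • w)
    _ = q w := by rw [map_smul_eq_mul, ha, one_mul]

lemma exists_strongDual_norm_le_one_comp_eq [SeminormedAddCommGroup F] [NormedSpace 𝕜 F]
    {A : E →ₗ[𝕜] F} {φ : Module.Dual 𝕜 E} (h : ∀ w, ‖φ w‖ ≤ ‖A w‖) :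
    ∃ f : StrongDual 𝕜 F, ‖f‖ ≤ 1 ∧ f.toLinearMap ∘ₗ A = φ := by
  have hker : φ ∈ A.ker.dualAnnihilator := by
    refine (Submodule.mem_dualAnnihilator φ).2 fun w hw ↦ norm_le_zero_iff.1 ?_
    simpa only [LinearMap.mem_ker.1 hw, norm_zero] using h w
  obtain ⟨ψ, rfl⟩ := A.range_dualMap_eq_dualAnnihilator_ker.ge hker
  have hψ : ∀ y : A.range, ‖ψ.domRestrict A.range y‖ ≤ normSeminorm 𝕜 F y := by
    rintro ⟨_, w, rfl⟩
    exact h w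
  obtain ⟨f, hfψ, hf⟩ :=
    Module.Dual.exists_continuous_extension_of_le_seminorm A.range _ continuous_norm hψ
  refine ⟨f, f.opNorm_le_bound zero_le_one fun y ↦ ?_, LinearMap.ext fun w ↦ ?_⟩
  · exact (hf y).trans_eq (one_mul _).symm
  · exact hfψ ⟨A w, A.mem_range_self w⟩

lemma exists_norm_le_one_inner_map_eq [NormedAddCommGroup F] [InnerProductSpace 𝕜 F]
    [CompleteSpace F] {A : E →ₗ[𝕜] F} {φ : Module.Dual 𝕜 E}
    (h : ∀ w, RCLike.re (φ w) ≤ ‖A w‖) :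
    ∃ v : F, ‖v‖ ≤ 1 ∧ ∀ w, inner 𝕜 v (A w) = φ w := by
  have hnorm : ∀ w, ‖φ w‖ ≤ ‖A w‖ :=
    norm_le_seminorm_of_forall_re_le (q := (normSeminorm 𝕜 F).comp A) h
  obtain ⟨f, hf, rfl⟩ := exists_strongDual_norm_le_one_comp_eq hnorm
  refine ⟨(InnerProductSpace.toDual 𝕜 F).symm f, ?_, fun w ↦ ?_⟩
  · rwa [LinearIsometryEquiv.norm_map]
  · exact InnerProductSpace.toDual_symm_apply

end HahnBanach

theorem stmt5_general {𝕜 E F : Type*} [RCLike 𝕜] [NormedAddCommGroup E] [InnerProductSpace 𝕜 E]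
    [NormedAddCommGroup F] [InnerProductSpace 𝕜 F] [CompleteSpace F]
    {T : F →ₗ[𝕜] E} {A : E →ₗ[𝕜] F} (hTA : ∀ v w, inner 𝕜 (T v) w = inner 𝕜 v (A w)) (c : E) :
    {p : E | ∀ w, RCLike.re (inner 𝕜 (p - c) w) ≤ ‖A w‖} =
      {p : E | ∃ v : F, ‖v‖ ≤ 1 ∧ p = c + T v} := by
  ext p
  constructor
  · intro hp
    obtain ⟨v, hv, hvp⟩ := exists_norm_le_one_inner_map_eq (φ := innerₛₗ 𝕜 (p - c)) hp
    have hTv : T v = p - c := ext_inner_right 𝕜 fun w ↦ (hTA v w).trans (hvp w)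
    exact ⟨v, hv, by rw [hTv, add_sub_cancel]⟩
  · rintro ⟨v, hv, rfl⟩ w
    calc RCLike.re (inner 𝕜 (c + T v - c) w) = RCLike.re (inner 𝕜 v (A w)) := by
          rw [add_sub_cancel_left, hTA]
      _ ≤ ‖v‖ * ‖A w‖ := re_inner_le_norm v (A w)
      _ ≤ ‖A w‖ := mul_le_of_le_one_left (norm_nonneg _) hv

lemma inner_toEuclideanLin_left {𝕜 m n : Type*} [RCLike 𝕜] [Fintype m] [DecidableEq m] [Fintype n]
    [DecidableEq n] (S : Matrix m n 𝕜) (v : EuclideanSpace 𝕜 n) (w : EuclideanSpace 𝕜 m) :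
    inner 𝕜 (S.toEuclideanLin v) w = inner 𝕜 v (Sᴴ.toEuclideanLin w) := by
  rw [toEuclideanLin_conjTranspose_eq_adjoint, LinearMap.adjoint_inner_right]

/-- the set of p ∈ ℝ^m satisfying ⟨p − c, w⟩ ≤ ‖Sᵀw‖₂ for every
direction w equals the hyper-ellipsoid c + S·(closed Euclidean unit ball). -/
theorem stmt5 (m k : ℕ) (hm : 1 ≤ m) (hk : 1 ≤ k)
    (S : Matrix (Fin m) (Fin k) ℝ) (c : Fin m → ℝ) :
    {p : Fin m → ℝ | ∀ w : Fin m → ℝ,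
        ∑ x, (p x - c x) * w x ≤ Real.sqrt (∑ j, ((Sᵀ *ᵥ w) j) ^ 2)} =
      {p : Fin m → ℝ | ∃ v : Fin k → ℝ,
        Real.sqrt (∑ j, v j ^ 2) ≤ 1 ∧ p = c + S *ᵥ v} := by
  ext p
  have h := Set.ext_iff.1 (stmt5_general (inner_toEuclideanLin_left S) (.toLp 2 c)) (.toLp 2 p)
  simpa [EuclideanSpace.norm_eq, PiLp.inner_apply, mul_comm, ← WithLp.toLp_add,
    (WithLp.equiv 2 _).forall_congr_left, (WithLp.equiv 2 _).exists_congr_left] using h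
end

section
/- Let m, k ≥ 1, let S be an m×k real matrix, let c ∈ ℝ^m, and set Q := S Sᵀ. For p ∈ ℝ^m, the following are equivalent: (i) there exists v ∈ ℝ^k with ‖v‖₂ ≤ 1 and p = c + S v; (ii) there exists z ∈ ℝ^m with Q z = p − c and ⟨p − c, z⟩ ≤ 1. (This is the pseudoinverse-free form of the hyper-ellipsoid system (I − Q⁻¹Q)(p − c) = 0, (p − c)ᵀ Q⁻¹ (p − c) ≤ 1, where Q⁻¹ is the Moore–Penrose pseudoinverse.) -/
open Matrix Finset

/-!
The matrices `S * Sᵀ` and `S` have the same range, so a vector `y = S *ᵥ v` is also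
`(S * Sᵀ) *ᵥ z` for some `z`. The preimage `w = Sᵀ *ᵥ z` of `y` is orthogonal to the kernel of `S`,
hence is the shortest preimage of `y`, and its squared length is `w ⬝ᵥ w = y ⬝ᵥ z`. So `y` has a
preimage of squared length at most `r` exactly when `y ⬝ᵥ z ≤ r`.
-/

section

variable {R m n : Type*} [Fintype m] [Fintype n]

theorem self_mul_transpose_mulVec_dotProduct [CommSemiring R] (S : Matrix m n R) (z : m → R) :
    ((S * Sᵀ) *ᵥ z) ⬝ᵥ z = (Sᵀ *ᵥ z) ⬝ᵥ (Sᵀ *ᵥ z) := by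
  rw [← mulVec_mulVec, dotProduct_comm, ← dotProduct_transpose_mulVec]

theorem transpose_mulVec_dotProduct_eq_zero_of_mulVec_eq_zero [CommSemiring R] {S : Matrix m n R}
    {u : n → R} (hu : S *ᵥ u = 0) (z : m → R) : (Sᵀ *ᵥ z) ⬝ᵥ u = 0 := by
  rw [dotProduct_comm, dotProduct_transpose_mulVec, hu, dotProduct_zero]

theorem transpose_mulVec_dotProduct_self_le [CommRing R] [LinearOrder R] [IsOrderedRing R]
    {S : Matrix m n R} {z : m → R} {v : n → R} (h : (S * Sᵀ) *ᵥ z = S *ᵥ v) :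
    (Sᵀ *ᵥ z) ⬝ᵥ (Sᵀ *ᵥ z) ≤ v ⬝ᵥ v := by
  set w := Sᵀ *ᵥ z with hw
  have hker : S *ᵥ (v - w) = 0 := by rw [mulVec_sub, hw, mulVec_mulVec, h, sub_self]
  have horth : w ⬝ᵥ (v - w) = 0 := transpose_mulVec_dotProduct_eq_zero_of_mulVec_eq_zero hker z
  have hnonneg : 0 ≤ (v - w) ⬝ᵥ (v - w) := sum_nonneg fun i _ ↦ mul_self_nonneg ((v - w) i)
  calc
    w ⬝ᵥ w ≤ w ⬝ᵥ w + (v - w) ⬝ᵥ (v - w) := le_add_of_nonneg_right hnonneg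
    _ = (w + (v - w)) ⬝ᵥ (w + (v - w)) := by
      simp only [add_dotProduct, dotProduct_add, dotProduct_comm (v - w) w, horth, add_zero,
        zero_add]
    _ = v ⬝ᵥ v := by rw [add_sub_cancel]

variable [Field R] [LinearOrder R] [IsStrictOrderedRing R]

theorem range_mulVecLin_self_mul_transpose (S : Matrix m n R) :
    (S * Sᵀ).mulVecLin.range = S.mulVecLin.range := by
  refine Submodule.eq_of_le_of_finrank_eq ?_ (rank_self_mul_transpose S)
  rw [mulVecLin_mul]
  exact LinearMap.range_comp_le_range _ _

theorem exists_self_mul_transpose_mulVec_eq (S : Matrix m n R) (v : n → R) :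
    ∃ z, (S * Sᵀ) *ᵥ z = S *ᵥ v := by
  have hv : S *ᵥ v ∈ (S * Sᵀ).mulVecLin.range :=
    range_mulVecLin_self_mul_transpose S ▸ LinearMap.mem_range_self S.mulVecLin v
  exact hv

theorem stmt6_general (S : Matrix m n R) (c p : m → R) (r : R) :
    (∃ v, v ⬝ᵥ v ≤ r ∧ p = c + S *ᵥ v) ↔
      ∃ z, (S * Sᵀ) *ᵥ z = p - c ∧ (p - c) ⬝ᵥ z ≤ r := by
  constructor
  · rintro ⟨v, hv, rfl⟩
    obtain ⟨z, hz⟩ := exists_self_mul_transpose_mulVec_eq S v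
    rw [add_sub_cancel_left]
    refine ⟨z, hz, ?_⟩
    calc
      (S *ᵥ v) ⬝ᵥ z = (Sᵀ *ᵥ z) ⬝ᵥ (Sᵀ *ᵥ z) := by
        rw [← hz, self_mul_transpose_mulVec_dotProduct]
      _ ≤ v ⬝ᵥ v := transpose_mulVec_dotProduct_self_le hz
      _ ≤ r := hv
  · rintro ⟨z, hz, hle⟩
    refine ⟨Sᵀ *ᵥ z, ?_, ?_⟩
    · rwa [← self_mul_transpose_mulVec_dotProduct, hz]
    · rw [mulVec_mulVec, hz, add_sub_cancel]

end

/-- pseudoinverse-free form of the hyper-ellipsoid system.  With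
Q = S Sᵀ, membership p ∈ c + S·(unit ball) is equivalent to the existence of
z with Q z = p − c and ⟨p − c, z⟩ ≤ 1. -/
theorem stmt6 (m k : ℕ) (hm : 1 ≤ m) (hk : 1 ≤ k)
    (S : Matrix (Fin m) (Fin k) ℝ) (c : Fin m → ℝ)
    (Q : Matrix (Fin m) (Fin m) ℝ) (hQ : Q = S * Sᵀ)
    (p : Fin m → ℝ) :
    (∃ v : Fin k → ℝ, Real.sqrt (∑ j, v j ^ 2) ≤ 1 ∧ p = c + S *ᵥ v) ↔
      (∃ z : Fin m → ℝ, Q *ᵥ z = p - c ∧ ∑ x, (p x - c x) * z x ≤ 1) := by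
  subst hQ
  simpa [dotProduct, sq, Real.sqrt_le_iff] using stmt6_general S c p 1
end

section
/- Let m ≥ 1, let ρ_0, …, ρ_{m−1} be qubit states with m×3 Bloch matrix S, and let u ∈ ℝ^m be the all-ones vector. For every p in the convex hull of {0, u} ∪ { ½u + S v : v ∈ ℝ³, ‖v‖₂ ≤ 1 }, there exists a two-outcome POVM (π_0, π_1) on ℂ² such that Tr[ρ_x π_0] = p_x for all x. (Converse direction of Proposition 2: conv{0, u, hyper-ellipsoid} ⊆ S₂(ρ_x).) -/
open Matrix Finset
open scoped ComplexOrder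

/-!
The outcome vectors of two-outcome POVMs form the image of the Loewner interval `[0, 1]` under a
linear map, hence a convex set, so it is enough to realise the generators of the convex hull. The
points `0` and `u` come from the trivial POVMs. The point `½u + S v` comes from the effect
`½(1 + v·σ)`: the Clifford relation `(v·σ)² = ‖v‖² 1` reduces its positivity, and that of its
complement, to the identity `2(1 + a) = (1 + a)² + (1 - a²)` for a self-adjoint `a` with `a² ≤ 1`.
-/

section StarOrderedRing

variable {R : Type*} [Ring R] [PartialOrder R] [StarRing R] [StarOrderedRing R]
  [Algebra ℝ R] [PosSMulMono ℝ R] {a : R}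

theorem half_smul_one_add_nonneg_of_mul_self_le_one (ha : IsSelfAdjoint a) (h : a * a ≤ 1) :
    0 ≤ (1 / 2 : ℝ) • (1 + a) := by
  have isSelfAdjoint_one_add : IsSelfAdjoint (1 + a) := (IsSelfAdjoint.one R).add ha
  have sum_nonneg : 0 ≤ (1 + a) * (1 + a) + (1 - a * a) :=
    add_nonneg isSelfAdjoint_one_add.mul_self_nonneg (sub_nonneg.2 h)
  have sum_eq : (1 / 2 : ℝ) • (1 + a) = (1 / 4 : ℝ) • ((1 + a) * (1 + a) + (1 - a * a)) := by
    simp only [add_mul, mul_add, one_mul, mul_one]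
    module
  exact sum_eq ▸ smul_nonneg (by norm_num) sum_nonneg

theorem half_smul_one_add_mem_Icc_of_mul_self_le_one (ha : IsSelfAdjoint a) (h : a * a ≤ 1) :
    (1 / 2 : ℝ) • (1 + a) ∈ Set.Icc 0 1 := by
  have complement : 1 - (1 / 2 : ℝ) • (1 + a) = (1 / 2 : ℝ) • (1 + -a) := by module
  refine ⟨half_smul_one_add_nonneg_of_mul_self_le_one ha h, sub_nonneg.1 ?_⟩
  rw [complement]
  exact half_smul_one_add_nonneg_of_mul_self_le_one ha.neg (by rwa [neg_mul_neg])

end StarOrderedRing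

section BinaryCorrelations

open scoped MatrixOrder

variable {ι n : Type*} [Fintype n]

/-- The real parts of the numbers `Tr[ρ_x E]`, as a real-linear function of `E`. For states `ρ_x`
and an effect `E` these are the outcome probabilities of `E`. -/
noncomputable def correlation (ρ : ι → Matrix n n ℂ) : Matrix n n ℂ →ₗ[ℝ] (ι → ℝ) :=
  LinearMap.pi fun x =>
    Complex.reLm ∘ₗ traceLinearMap n ℝ ℂ ∘ₗ LinearMap.mulLeft ℝ (ρ x)

theorem correlation_apply (ρ : ι → Matrix n n ℂ) (E : Matrix n n ℂ) (x : ι) :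
    correlation ρ E x = (ρ x * E).trace.re :=
  rfl

variable [DecidableEq n]

theorem correlation_one (ρ : ι → Matrix n n ℂ) :
    correlation ρ 1 = fun x => (ρ x).trace.re :=
  funext fun x => by rw [correlation_apply, mul_one]

/-- The set `S₂(ρ)` of correlation vectors of two-outcome POVMs `(E, 1 - E)`. Such a POVM is encoded
by its first element, an arbitrary matrix `0 ≤ E ≤ 1` in the Loewner order. -/
def binaryCorrelations (ρ : ι → Matrix n n ℂ) : Set (ι → ℝ) :=
  correlation ρ '' Set.Icc 0 1

theorem mem_binaryCorrelations_iff {ρ : ι → Matrix n n ℂ} {p : ι → ℝ} :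
    p ∈ binaryCorrelations ρ ↔ ∃ π₀ π₁ : Matrix n n ℂ,
      π₀.PosSemidef ∧ π₁.PosSemidef ∧ π₀ + π₁ = 1 ∧ ∀ x, (ρ x * π₀).trace.re = p x := by
  constructor
  · rintro ⟨E, ⟨hE₀, hE₁⟩, rfl⟩
    exact ⟨E, 1 - E, hE₀.posSemidef, le_iff.1 hE₁, add_sub_cancel E 1, correlation_apply ρ E⟩
  · rintro ⟨π₀, π₁, h₀, h₁, hsum, hp⟩
    exact ⟨π₀, ⟨h₀.nonneg, le_iff.2 (eq_sub_of_add_eq' hsum ▸ h₁)⟩, funext hp⟩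

theorem convex_binaryCorrelations (ρ : ι → Matrix n n ℂ) : Convex ℝ (binaryCorrelations ρ) :=
  (convex_Icc 0 1).linear_image (correlation ρ)

theorem zero_mem_binaryCorrelations (ρ : ι → Matrix n n ℂ) : 0 ∈ binaryCorrelations ρ :=
  ⟨0, Set.left_mem_Icc.2 zero_le_one, map_zero (correlation ρ)⟩

theorem re_trace_mem_binaryCorrelations (ρ : ι → Matrix n n ℂ) :
    (fun x => (ρ x).trace.re) ∈ binaryCorrelations ρ :=
  ⟨1, Set.right_mem_Icc.2 zero_le_one, correlation_one ρ⟩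

end BinaryCorrelations

section Bloch

open scoped MatrixOrder

/-- The matrix `v·σ = v₁σ₁ + v₂σ₂ + v₃σ₃` attached to a real vector `v`. -/
noncomputable def pauliDot (v : Fin 3 → ℝ) : Matrix (Fin 2) (Fin 2) ℂ :=
  ∑ k, v k • pauli k

theorem isSelfAdjoint_pauli (k : Fin 3) : IsSelfAdjoint (pauli k) := by
  ext i j
  fin_cases k <;> fin_cases i <;> fin_cases j <;> simp [pauli]

theorem isSelfAdjoint_pauliDot (v : Fin 3 → ℝ) : IsSelfAdjoint (pauliDot v) :=
  isSelfAdjoint_sum _ fun k _ => (IsSelfAdjoint.all (v k)).smul (isSelfAdjoint_pauli k)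

theorem pauliDot_eq (v : Fin 3 → ℝ) :
    pauliDot v = !![(v 2 : ℂ), v 0 - v 1 * Complex.I; v 0 + v 1 * Complex.I, -v 2] := by
  ext i j
  fin_cases i <;> fin_cases j <;> simp [pauliDot, pauli, Fin.sum_univ_three, sub_eq_add_neg]

theorem pauliDot_mul_self (v : Fin 3 → ℝ) :
    pauliDot v * pauliDot v = (∑ k, v k ^ 2) • (1 : Matrix (Fin 2) (Fin 2) ℂ) := by
  have conj_mul : ((v 0 : ℂ) + v 1 * Complex.I) * (v 0 - v 1 * Complex.I) = v 0 ^ 2 + v 1 ^ 2 := by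
    linear_combination (-(v 1 : ℂ) ^ 2) * Complex.I_sq
  rw [pauliDot_eq, mul_fin_two, Fin.sum_univ_three]
  ext i j
  fin_cases i <;> fin_cases j <;> simp <;> grind

/-- The qubit effect `½(1 + v·σ)` with Bloch vector `v`. -/
noncomputable def blochEffect (v : Fin 3 → ℝ) : Matrix (Fin 2) (Fin 2) ℂ :=
  (1 / 2 : ℝ) • (1 + pauliDot v)

theorem blochEffect_mem_Icc {v : Fin 3 → ℝ} (hv : ∑ k, v k ^ 2 ≤ 1) :
    blochEffect v ∈ Set.Icc 0 1 := by
  refine half_smul_one_add_mem_Icc_of_mul_self_le_one (isSelfAdjoint_pauliDot v) ?_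
  calc pauliDot v * pauliDot v = (∑ k, v k ^ 2) • 1 := pauliDot_mul_self v
    _ ≤ (1 : ℝ) • 1 := smul_le_smul_of_nonneg_right hv zero_le_one
    _ = 1 := one_smul ℝ 1

variable {ι : Type*} (ρ : ι → Matrix (Fin 2) (Fin 2) ℂ)

theorem correlation_pauliDot {S : Matrix ι (Fin 3) ℝ}
    (hS : ∀ x k, S x k = (ρ x * pauli k).trace.re / 2) (v : Fin 3 → ℝ) :
    correlation ρ (pauliDot v) = (2 : ℝ) • S *ᵥ v := by
  ext x
  calc correlation ρ (pauliDot v) x = ∑ k, v k * correlation ρ (pauli k) x := by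
        simp only [pauliDot, map_sum, map_smul, Finset.sum_apply, Pi.smul_apply, smul_eq_mul]
    _ = 2 * ∑ k, S x k * v k := by
        rw [Finset.mul_sum]
        exact Finset.sum_congr rfl fun k _ => by rw [correlation_apply, hS]; ring
    _ = ((2 : ℝ) • S *ᵥ v) x := rfl

theorem correlation_blochEffect {S : Matrix ι (Fin 3) ℝ}
    (hS : ∀ x k, S x k = (ρ x * pauli k).trace.re / 2) (v : Fin 3 → ℝ) :
    correlation ρ (blochEffect v) = (1 / 2 : ℝ) • (fun x => (ρ x).trace.re) + S *ᵥ v := by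
  rw [blochEffect, map_smul, map_add, correlation_pauliDot ρ hS, correlation_one]
  module

end Bloch

theorem stmt8_general {ι : Type*} (ρ : ι → Matrix (Fin 2) (Fin 2) ℂ)
    (S : Matrix ι (Fin 3) ℝ) (hS : ∀ x k, S x k = ((ρ x * pauli k).trace).re / 2)
    (u : ι → ℝ) (hu : u = fun x => (ρ x).trace.re)
    (p : ι → ℝ)
    (hp : p ∈ convexHull ℝ
      ({0, u} ∪ {q : ι → ℝ | ∃ v : Fin 3 → ℝ,
        Real.sqrt (∑ j, v j ^ 2) ≤ 1 ∧ q = (1 / 2 : ℝ) • u + S *ᵥ v})) :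
    ∃ π₀ π₁ : Matrix (Fin 2) (Fin 2) ℂ,
      π₀.PosSemidef ∧ π₁.PosSemidef ∧ π₀ + π₁ = 1 ∧
      ∀ x, ((ρ x * π₀).trace).re = p x := by
  subst hu
  rw [← mem_binaryCorrelations_iff]
  refine convexHull_min ?_ (convex_binaryCorrelations ρ) hp
  rintro q ((rfl | rfl) | ⟨v, hv, rfl⟩)
  · exact zero_mem_binaryCorrelations ρ
  · exact re_trace_mem_binaryCorrelations ρ
  · exact ⟨blochEffect v, blochEffect_mem_Icc (Real.sqrt_le_one.1 hv),
      correlation_blochEffect ρ hS v⟩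

/-- converse direction of Proposition 2: every p in the convex hull
of {0, u} and the hyper-ellipsoid ½u + S·(unit ball) is the correlation vector
p_x = Tr[ρ_x π₀] of some two-outcome POVM (π₀, π₁). -/
theorem stmt8 (m : ℕ) (hm : 1 ≤ m)
    (ρ : Fin m → Matrix (Fin 2) (Fin 2) ℂ)
    (hρ : ∀ x, (ρ x).PosSemidef ∧ (ρ x).trace = 1)
    (S : Matrix (Fin m) (Fin 3) ℝ)
    (hS : ∀ x k, S x k = ((ρ x * pauli k).trace).re / 2)
    (u : Fin m → ℝ) (hu : u = fun _ => 1)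
    (p : Fin m → ℝ)
    (hp : p ∈ convexHull ℝ
      ({0, u} ∪ {q : Fin m → ℝ | ∃ v : Fin 3 → ℝ,
        Real.sqrt (∑ j, v j ^ 2) ≤ 1 ∧ q = (1 / 2 : ℝ) • u + S *ᵥ v})) :
    ∃ π₀ π₁ : Matrix (Fin 2) (Fin 2) ℂ,
      π₀.PosSemidef ∧ π₁.PosSemidef ∧ π₀ + π₁ = 1 ∧
      ∀ x, ((ρ x * π₀).trace).re = p x :=
  stmt8_general ρ S hS u (hu.trans (funext fun x => by rw [(hρ x).2, Complex.one_re])) p hp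
end

section
/- Let α ∈ (0, π), and let ρ_0 = |ψ_0⟩⟨ψ_0| and ρ_1 = |ψ_1⟩⟨ψ_1| be the qubit pure states with ψ_0 = (1,0)ᵀ and ψ_1 = (cos(α/2), sin(α/2))ᵀ. Then the set { (Tr[ρ_0 π_0], Tr[ρ_1 π_0]) ∈ ℝ² : (π_0, π_1) a two-outcome POVM on ℂ² } equals the convex hull of { (0,0), (1,1) } ∪ { (p_0, p_1) ∈ ℝ² : (p_0 + p_1 − 1)²/(1 + cos α) + (p_0 − p_1)²/(1 − cos α) ≤ ½ }. -/
open Matrix Finset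
open scoped ComplexOrder

/-! In Bloch coordinates `E = (t + v · σ) / 2` the qubit effects form the double cone
`‖v‖ ≤ min t (2 - t)`, which is the convex hull of its apexes `0`, `1` and of the unit ball of
states `t = 1`. A pair of states acts on the double cone by a linear map, and linear maps commute
with convex hulls, so only the image of the ball has to be found. For pure states with unit Bloch
vectors `m` and `n` it is an ellipse, whose principal axes come from the orthogonal vectors `m + n`
and `m - n`. -/

open Metric
open scoped RealInnerProductSpace

section DoubleCone

variable {V : Type*} [NormedAddCommGroup V]

/-- The solid double cone with apexes `(0, 0)` and `(2, 0)` over the unit ball at height `1`: the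
set of Bloch coordinates of the effects `0 ≤ E ≤ 1` of a qubit, with `x.1` the trace of `E`. -/
def doubleCone (V : Type*) [NormedAddCommGroup V] : Set (ℝ × V) :=
  {x | ‖x.2‖ ≤ x.1 ∧ ‖x.2‖ ≤ 2 - x.1}

variable [NormedSpace ℝ V]

lemma convex_doubleCone : Convex ℝ (doubleCone V) := by
  have hnorm : ConvexOn ℝ Set.univ fun x : ℝ × V ↦ ‖x.2‖ :=
    convexOn_univ_norm.comp_linearMap (LinearMap.snd ℝ ℝ V)
  have hfst : ConcaveOn ℝ Set.univ fun x : ℝ × V ↦ x.1 :=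
    (LinearMap.fst ℝ ℝ V).concaveOn convex_univ
  have hsub : ConcaveOn ℝ Set.univ fun x : ℝ × V ↦ 2 - x.1 :=
    (concaveOn_const 2 convex_univ).sub ((LinearMap.fst ℝ ℝ V).convexOn convex_univ)
  simpa [doubleCone, Set.ofPred_and] using
    (hnorm.sub hfst).convex_le 0 |>.inter ((hnorm.sub hsub).convex_le 0)

lemma doubleCone_eq_convexHull :
    doubleCone V = convexHull ℝ ({(0, 0), (2, 0)} ∪ {1} ×ˢ closedBall 0 1) := by
  refine Set.Subset.antisymm ?_ (convexHull_min ?_ convex_doubleCone)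
  · rintro ⟨t, v⟩ ⟨hv, hv'⟩
    refine mem_convexHull_of_exists_fintype
      ![(2 - t - ‖v‖) / 2, (t - ‖v‖) / 2, ‖v‖] ![(0, 0), (2, 0), (1, ‖v‖⁻¹ • v)] ?_ ?_ ?_ ?_
    · have hzero : 0 ≤ (2 - t - ‖v‖) / 2 := div_nonneg (sub_nonneg.mpr hv') two_pos.le
      have htwo : 0 ≤ (t - ‖v‖) / 2 := div_nonneg (sub_nonneg.mpr hv) two_pos.le
      simp [Fin.forall_fin_succ, hzero, htwo]
    · simp only [Fin.sum_univ_three, Matrix.cons_val]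
      ring
    · have hunit : ‖v‖⁻¹ * ‖v‖ ≤ 1 := inv_mul_le_one
      simpa [Fin.forall_fin_succ, norm_smul] using hunit
    · have hv_eq : ‖v‖ • ‖v‖⁻¹ • v = v := by
        obtain rfl | hne := eq_or_ne v 0
        · simp
        · exact smul_inv_smul₀ (norm_ne_zero_iff.mpr hne) v
      simp [Fin.sum_univ_three, hv_eq]
  · rintro ⟨t, v⟩ ((h | h) | ⟨rfl, hv⟩)
    · obtain ⟨rfl, rfl⟩ := Prod.mk.inj h
      simp [doubleCone]
    · obtain ⟨rfl, rfl⟩ := Prod.mk.inj h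
      simp [doubleCone]
    · have hv : ‖v‖ ≤ 1 := by simpa using hv
      constructor <;> dsimp only <;> linarith

end DoubleCone

section InnerProductSpace

variable {V : Type*} [NormedAddCommGroup V] [InnerProductSpace ℝ V] {a b m n : V}

lemma image_inner_closedBall_of_inner_eq_zero (ha : a ≠ 0) (hb : b ≠ 0) (hab : ⟪a, b⟫ = 0) :
    (fun v ↦ (⟪a, v⟫, ⟪b, v⟫)) '' closedBall 0 1 =
      {x : ℝ × ℝ | x.1 ^ 2 / ‖a‖ ^ 2 + x.2 ^ 2 / ‖b‖ ^ 2 ≤ 1} := by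
  have ha' : ‖a‖ ≠ 0 := norm_ne_zero_iff.mpr ha
  have hb' : ‖b‖ ≠ 0 := norm_ne_zero_iff.mpr hb
  -- The vector of minimal norm whose inner products with `a` and `b` are the coordinates of `x`.
  let p (x : ℝ × ℝ) : V := (x.1 / ‖a‖ ^ 2) • a + (x.2 / ‖b‖ ^ 2) • b
  have hpa (x : ℝ × ℝ) : ⟪a, p x⟫ = x.1 := by
    simp [p, inner_add_right, inner_smul_right, hab, ha']
  have hpb (x : ℝ × ℝ) : ⟪b, p x⟫ = x.2 := by
    simp [p, inner_add_right, inner_smul_right, real_inner_comm, hab, hb']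
  have inner_p (x : ℝ × ℝ) (v : V) :
      ⟪p x, v⟫ = x.1 * ⟪a, v⟫ / ‖a‖ ^ 2 + x.2 * ⟪b, v⟫ / ‖b‖ ^ 2 := by
    simp only [p, inner_add_left, real_inner_smul_left]
    ring
  have norm_p_sq (x : ℝ × ℝ) : ‖p x‖ ^ 2 = x.1 ^ 2 / ‖a‖ ^ 2 + x.2 ^ 2 / ‖b‖ ^ 2 := by
    rw [← real_inner_self_eq_norm_sq, inner_p, hpa, hpb, sq x.1, sq x.2]
  ext x
  rw [Set.mem_ofPred_eq, ← norm_p_sq, sq_le_one_iff₀ (norm_nonneg _)]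
  constructor
  · rintro ⟨v, hv, rfl⟩
    have hv : ‖v‖ ≤ 1 := by simpa using hv
    set x := (⟪a, v⟫, ⟪b, v⟫)
    have hpv : ‖p x‖ ^ 2 = ⟪p x, v⟫ := by rw [norm_p_sq, inner_p, sq x.1, sq x.2]
    have hle : ‖p x‖ ^ 2 ≤ ‖p x‖ := calc
      ‖p x‖ ^ 2 = ⟪p x, v⟫ := hpv
      _ ≤ ‖p x‖ * ‖v‖ := real_inner_le_norm _ _
      _ ≤ ‖p x‖ := mul_le_of_le_one_right (norm_nonneg _) hv
    nlinarith [norm_nonneg (p x)]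
  · intro hx
    exact ⟨p x, by simpa using hx, Prod.ext (hpa x) (hpb x)⟩

/-- The probability, according to the Born rule, of an effect with Bloch coordinates `(t, v)` in the
state with Bloch vector `n`. -/
noncomputable def bornRule (n : V) : ℝ × V →ₗ[ℝ] ℝ :=
  (1 / 2 : ℝ) • (LinearMap.fst ℝ ℝ V + innerₛₗ ℝ n ∘ₗ LinearMap.snd ℝ ℝ V)

lemma bornRule_apply (n : V) (x : ℝ × V) : bornRule n x = (x.1 + ⟪n, x.2⟫) / 2 := by
  rw [div_eq_inv_mul]
  simp [bornRule, mul_add]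

lemma image_bornRule_prod_states (hm : ‖m‖ = 1) (hn : ‖n‖ = 1) (hmn : |⟪m, n⟫| < 1) :
    (bornRule m).prod (bornRule n) '' ({1} ×ˢ closedBall 0 1) =
      {q : ℝ × ℝ |
        (q.1 + q.2 - 1) ^ 2 / (1 + ⟪m, n⟫) + (q.1 - q.2) ^ 2 / (1 - ⟪m, n⟫) ≤ 1 / 2} := by
  obtain ⟨hlower, hupper⟩ := abs_lt.mp hmn
  have hadd_sq : ‖m + n‖ ^ 2 = 2 * (1 + ⟪m, n⟫) := by
    rw [norm_add_sq_real, hm, hn]; ring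
  have hsub_sq : ‖m - n‖ ^ 2 = 2 * (1 - ⟪m, n⟫) := by
    rw [norm_sub_sq_real, hm, hn]; ring
  have hadd : m + n ≠ 0 := by
    rw [← norm_ne_zero_iff, ← sq_pos_iff, hadd_sq]; linarith
  have hsub : m - n ≠ 0 := by
    rw [← norm_ne_zero_iff, ← sq_pos_iff, hsub_sq]; linarith
  have orthogonal : ⟪m + n, m - n⟫ = 0 :=
    (real_inner_add_sub_eq_zero_iff m n).mpr (hm.trans hn.symm)
  have ellipse := image_inner_closedBall_of_inner_eq_zero hadd hsub orthogonal
  ext q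
  have mem_image : q ∈ (bornRule m).prod (bornRule n) '' ({1} ×ˢ closedBall 0 1) ↔
      (2 * (q.1 + q.2 - 1), 2 * (q.1 - q.2)) ∈
        (fun v ↦ (⟪m + n, v⟫, ⟪m - n, v⟫)) '' closedBall 0 1 := by
    simp only [Set.singleton_prod, Set.image_image, Set.mem_image, LinearMap.prod_apply,
      Function.prod_apply, bornRule_apply, inner_add_left, inner_sub_left, Prod.ext_iff]
    refine exists_congr fun v ↦ and_congr_right fun _ ↦ ⟨?_, ?_⟩ <;> rintro ⟨h₁, h₂⟩ <;>
      constructor <;> linarith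
  rw [mem_image, ellipse, Set.mem_ofPred_eq, Set.mem_ofPred_eq, hadd_sq, hsub_sq]
  have rescale (y z : ℝ) : (2 * y) ^ 2 / (2 * z) = 2 * (y ^ 2 / z) := by
    rw [mul_pow, sq 2, mul_assoc, mul_div_mul_left _ _ two_ne_zero, mul_div_assoc]
  rw [rescale, rescale, ← mul_add, le_div_iff₀' two_pos]

lemma image_bornRule_prod_doubleCone (hm : ‖m‖ = 1) (hn : ‖n‖ = 1) (hmn : |⟪m, n⟫| < 1) :
    (bornRule m).prod (bornRule n) '' doubleCone V =
      convexHull ℝ ({(0, 0), (1, 1)} ∪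
        {q : ℝ × ℝ |
          (q.1 + q.2 - 1) ^ 2 / (1 + ⟪m, n⟫) + (q.1 - q.2) ^ 2 / (1 - ⟪m, n⟫) ≤ 1 / 2}) := by
  rw [doubleCone_eq_convexHull, LinearMap.image_convexHull, Set.image_union,
    image_bornRule_prod_states hm hn hmn]
  simp [Set.image_pair, bornRule_apply]

end InnerProductSpace

section Matrix

lemma posSemidef_iff_trace_nonneg_and_det_nonneg {𝕜 : Type*} [RCLike 𝕜]
    {M : Matrix (Fin 2) (Fin 2) 𝕜} (hM : M.IsHermitian) :
    M.PosSemidef ↔ 0 ≤ M.trace ∧ 0 ≤ M.det := by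
  refine ⟨fun h ↦ ⟨h.trace_nonneg, h.det_nonneg⟩, fun ⟨htrace, hdet⟩ ↦ ?_⟩
  rw [hM.trace_eq_sum_eigenvalues, Fin.sum_univ_two] at htrace
  rw [hM.det_eq_prod_eigenvalues, Fin.prod_univ_two] at hdet
  norm_cast at htrace hdet
  rw [hM.posSemidef_iff_eigenvalues_nonneg, Pi.le_def, Fin.forall_fin_two]
  simp only [Pi.zero_apply]
  constructor <;> by_contra! hneg <;> nlinarith

lemma trace_vecMulVec_mul_vecMulVec {𝕜 ι : Type*} [RCLike 𝕜] [Fintype ι] (φ ψ : ι → 𝕜) :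
    (vecMulVec φ (star φ) * vecMulVec ψ (star ψ)).trace = (‖star φ ⬝ᵥ ψ‖ ^ 2 : ℝ) := by
  have hstar : φ ⬝ᵥ star ψ = star (star φ ⬝ᵥ ψ) := by
    rw [star_dotProduct, star_star, dotProduct_comm]
  rw [vecMulVec_mul_vecMulVec, trace_vecMulVec, dotProduct_smul, hstar, smul_eq_mul,
    RCLike.star_def, RCLike.mul_conj, RCLike.ofReal_pow]

lemma star_dotProduct_cos_sin (θ φ : ℝ) :
    star ![(Real.cos θ : ℂ), (Real.sin θ : ℂ)] ⬝ᵥ ![(Real.cos φ : ℂ), (Real.sin φ : ℂ)] =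
      Real.cos (φ - θ) := by
  simp [Real.cos_sub, dotProduct, Fin.sum_univ_two, -Complex.ofReal_cos, -Complex.ofReal_sin,
    mul_comm]

end Matrix

section Bloch

variable {m n v : EuclideanSpace ℝ (Fin 3)} {t : ℝ}

/-- The Hermitian matrix `(t + v · σ) / 2` with Bloch coordinates `(t, v)`, where `σ` is the vector
of Pauli matrices. It has trace `t`, so the qubit states have `t = 1` and Bloch vector `v`. -/
noncomputable def blochMatrix (t : ℝ) (v : EuclideanSpace ℝ (Fin 3)) : Matrix (Fin 2) (Fin 2) ℂ :=
  (1 / 2 : ℂ) • !![(t : ℂ) + v 2, v 0 - v 1 * Complex.I; v 0 + v 1 * Complex.I, t - v 2]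

lemma isHermitian_blochMatrix (t : ℝ) (v : EuclideanSpace ℝ (Fin 3)) :
    (blochMatrix t v).IsHermitian := by
  ext i j
  fin_cases i <;> fin_cases j <;> simp [blochMatrix, sub_eq_add_neg]

lemma exists_eq_blochMatrix {M : Matrix (Fin 2) (Fin 2) ℂ} (hM : M.IsHermitian) :
    ∃ t v, M = blochMatrix t v := by
  have h₀ : (M 0 0).im = 0 := Complex.conj_eq_iff_im.mp (hM.apply 0 0)
  have h₁ : (M 1 1).im = 0 := Complex.conj_eq_iff_im.mp (hM.apply 1 1)
  have hconj : star (M 1 0) = M 0 1 := hM.apply 0 1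
  have hM_eq : M = !![((M 0 0).re : ℂ), (M 1 0).re - (M 1 0).im * Complex.I;
      (M 1 0).re + (M 1 0).im * Complex.I, ((M 1 1).re : ℂ)] := by
    ext i j
    fin_cases i <;> fin_cases j <;> simp [Complex.ext_iff, h₀, h₁, ← hconj]
  refine ⟨(M 0 0).re + (M 1 1).re,
    !₂[2 * (M 1 0).re, 2 * (M 1 0).im, (M 0 0).re - (M 1 1).re], hM_eq.trans ?_⟩
  ext i j
  fin_cases i <;> fin_cases j <;> simp [blochMatrix, -Complex.re_add_im] <;> ring

lemma trace_blochMatrix (t : ℝ) (v : EuclideanSpace ℝ (Fin 3)) : (blochMatrix t v).trace = t := by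
  rw [blochMatrix, trace_smul, trace_fin_two_of, smul_eq_mul]
  ring

lemma det_blochMatrix (t : ℝ) (v : EuclideanSpace ℝ (Fin 3)) :
    (blochMatrix t v).det = ((t ^ 2 - ‖v‖ ^ 2) / 4 : ℝ) := by
  rw [blochMatrix, det_smul, det_fin_two_of, Fintype.card_fin, EuclideanSpace.real_norm_sq_eq,
    Fin.sum_univ_three]
  push_cast
  linear_combination ((v 1 : ℂ) ^ 2 / 4) * Complex.I_sq

lemma posSemidef_blochMatrix_iff : (blochMatrix t v).PosSemidef ↔ ‖v‖ ≤ t := by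
  rw [posSemidef_iff_trace_nonneg_and_det_nonneg (isHermitian_blochMatrix t v), trace_blochMatrix,
    det_blochMatrix, Complex.zero_le_real, Complex.zero_le_real]
  constructor
  · rintro ⟨ht, hdet⟩
    exact le_of_sq_le_sq (by linarith) ht
  · intro h
    have ht := (norm_nonneg v).trans h
    exact ⟨ht, by nlinarith [norm_nonneg v]⟩

lemma one_sub_blochMatrix (t : ℝ) (v : EuclideanSpace ℝ (Fin 3)) :
    1 - blochMatrix t v = blochMatrix (2 - t) (-v) := by
  ext i j
  fin_cases i <;> fin_cases j <;> simp [blochMatrix] <;> ring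

lemma posSemidef_and_posSemidef_one_sub_blochMatrix_iff :
    (blochMatrix t v).PosSemidef ∧ (1 - blochMatrix t v).PosSemidef ↔
      (t, v) ∈ doubleCone (EuclideanSpace ℝ (Fin 3)) := by
  rw [one_sub_blochMatrix, posSemidef_blochMatrix_iff, posSemidef_blochMatrix_iff, norm_neg]
  rfl

lemma trace_blochMatrix_one_mul (n v : EuclideanSpace ℝ (Fin 3)) (t : ℝ) :
    (blochMatrix 1 n * blochMatrix t v).trace = bornRule n (t, v) := by
  have inner_eq : ⟪n, v⟫ = n 0 * v 0 + n 1 * v 1 + n 2 * v 2 := by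
    simp [PiLp.inner_apply, Fin.sum_univ_three, mul_comm]
  rw [blochMatrix, blochMatrix, smul_mul_smul, mul_fin_two, trace_smul, trace_fin_two_of,
    smul_eq_mul, bornRule_apply, inner_eq]
  push_cast
  linear_combination (-(v 1 : ℂ) * n 1 / 2) * Complex.I_sq

lemma setOf_povm_probabilities_eq_image (m n : EuclideanSpace ℝ (Fin 3)) :
    {q : ℝ × ℝ | ∃ π₀ π₁ : Matrix (Fin 2) (Fin 2) ℂ,
        π₀.PosSemidef ∧ π₁.PosSemidef ∧ π₀ + π₁ = 1 ∧
        q = (((blochMatrix 1 m * π₀).trace).re, ((blochMatrix 1 n * π₀).trace).re)} =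
      (bornRule m).prod (bornRule n) '' doubleCone (EuclideanSpace ℝ (Fin 3)) := by
  ext q
  constructor
  · rintro ⟨π₀, π₁, h₀, h₁, hsum, rfl⟩
    obtain ⟨t, v, rfl⟩ := exists_eq_blochMatrix h₀.isHermitian
    obtain rfl := eq_sub_of_add_eq' hsum
    exact ⟨(t, v), posSemidef_and_posSemidef_one_sub_blochMatrix_iff.mp ⟨h₀, h₁⟩,
      by simp [trace_blochMatrix_one_mul]⟩
  · rintro ⟨⟨t, v⟩, hx, rfl⟩
    obtain ⟨h₀, h₁⟩ := posSemidef_and_posSemidef_one_sub_blochMatrix_iff.mpr hx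
    exact ⟨_, _, h₀, h₁, add_sub_cancel _ _, by simp [trace_blochMatrix_one_mul]⟩

lemma exists_vecMulVec_eq_blochMatrix {ψ : Fin 2 → ℂ} (hψ : star ψ ⬝ᵥ ψ = 1) :
    ∃ n, vecMulVec ψ (star ψ) = blochMatrix 1 n := by
  obtain ⟨t, n, h⟩ := exists_eq_blochMatrix (posSemidef_vecMulVec_self_star ψ).isHermitian
  have ht : (t : ℂ) = 1 := by
    rw [← trace_blochMatrix t n, ← h, trace_vecMulVec, dotProduct_comm, hψ]
  rw [Complex.ofReal_eq_one.mp ht] at h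
  exact ⟨n, h⟩

lemma inner_eq_of_vecMulVec_eq_blochMatrix {φ ψ : Fin 2 → ℂ}
    (hφ : vecMulVec φ (star φ) = blochMatrix 1 m) (hψ : vecMulVec ψ (star ψ) = blochMatrix 1 n) :
    ⟪m, n⟫ = 2 * ‖star φ ⬝ᵥ ψ‖ ^ 2 - 1 := by
  have h : ((‖star φ ⬝ᵥ ψ‖ ^ 2 : ℝ) : ℂ) = bornRule m (1, n) := by
    rw [← trace_blochMatrix_one_mul, ← hφ, ← hψ]
    exact (trace_vecMulVec_mul_vecMulVec φ ψ).symm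
  rw [Complex.ofReal_inj, bornRule_apply] at h
  linarith

lemma norm_eq_one_of_vecMulVec_eq_blochMatrix {ψ : Fin 2 → ℂ} (hψ : star ψ ⬝ᵥ ψ = 1)
    (h : vecMulVec ψ (star ψ) = blochMatrix 1 n) : ‖n‖ = 1 := by
  have hn : ‖n‖ ^ 2 = 1 := by
    rw [← real_inner_self_eq_norm_sq, inner_eq_of_vecMulVec_eq_blochMatrix h h, hψ]
    norm_num
  exact (pow_eq_one_iff_of_nonneg (norm_nonneg n) two_ne_zero).mp hn

end Bloch

theorem stmt10_general {α : ℝ} (hα : Real.sin α ≠ 0) {ψ₀ ψ₁ : Fin 2 → ℂ}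
    (hψ₀ : star ψ₀ ⬝ᵥ ψ₀ = 1) (hψ₁ : star ψ₁ ⬝ᵥ ψ₁ = 1)
    (hoverlap : ‖star ψ₀ ⬝ᵥ ψ₁‖ = |Real.cos (α / 2)|) :
    {q : ℝ × ℝ | ∃ π₀ π₁ : Matrix (Fin 2) (Fin 2) ℂ,
        π₀.PosSemidef ∧ π₁.PosSemidef ∧ π₀ + π₁ = 1 ∧
        q = (((vecMulVec ψ₀ (star ψ₀) * π₀).trace).re,
          ((vecMulVec ψ₁ (star ψ₁) * π₀).trace).re)} =
      convexHull ℝ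
        ({((0 : ℝ), (0 : ℝ)), ((1 : ℝ), (1 : ℝ))} ∪
          {q : ℝ × ℝ |
            (q.1 + q.2 - 1) ^ 2 / (1 + Real.cos α) +
              (q.1 - q.2) ^ 2 / (1 - Real.cos α) ≤ 1 / 2}) := by
  obtain ⟨m, hm⟩ := exists_vecMulVec_eq_blochMatrix hψ₀
  obtain ⟨n, hn⟩ := exists_vecMulVec_eq_blochMatrix hψ₁
  have hmn : ⟪m, n⟫ = Real.cos α := by
    rw [inner_eq_of_vecMulVec_eq_blochMatrix hm hn, hoverlap, sq_abs, ← Real.cos_two_mul,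
      mul_div_cancel₀ α two_ne_zero]
  have hcos : |⟪m, n⟫| < 1 := by
    rw [hmn, ← sq_lt_one_iff_abs_lt_one, Real.cos_sq']
    exact sub_lt_self 1 (sq_pos_of_ne_zero hα)
  rw [hm, hn, setOf_povm_probabilities_eq_image, ← hmn]
  exact image_bornRule_prod_doubleCone (norm_eq_one_of_vecMulVec_eq_blochMatrix hψ₀ hm)
    (norm_eq_one_of_vecMulVec_eq_blochMatrix hψ₁ hn) hcos

/-- for α ∈ (0, π) and the pure states ρ₀ = |ψ₀⟩⟨ψ₀|,
ρ₁ = |ψ₁⟩⟨ψ₁| with ψ₀ = (1,0)ᵀ, ψ₁ = (cos(α/2), sin(α/2))ᵀ, the set of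
correlation pairs (Tr[ρ₀π₀], Tr[ρ₁π₀]) over all two-outcome POVMs equals the
convex hull of {(0,0), (1,1)} and the ellipse
(p₀+p₁−1)²/(1+cos α) + (p₀−p₁)²/(1−cos α) ≤ ½. -/
theorem stmt10 (α : ℝ) (hα : α ∈ Set.Ioo 0 Real.pi)
    (ψ₀ ψ₁ : Fin 2 → ℂ)
    (hψ₀ : ψ₀ = ![1, 0])
    (hψ₁ : ψ₁ = ![(Real.cos (α / 2) : ℂ), (Real.sin (α / 2) : ℂ)])
    (ρ₀ ρ₁ : Matrix (Fin 2) (Fin 2) ℂ)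
    (hρ₀ : ρ₀ = Matrix.vecMulVec ψ₀ (star ψ₀))
    (hρ₁ : ρ₁ = Matrix.vecMulVec ψ₁ (star ψ₁)) :
    {q : ℝ × ℝ | ∃ π₀ π₁ : Matrix (Fin 2) (Fin 2) ℂ,
        π₀.PosSemidef ∧ π₁.PosSemidef ∧ π₀ + π₁ = 1 ∧
        q = (((ρ₀ * π₀).trace).re, ((ρ₁ * π₀).trace).re)} =
      convexHull ℝ
        ({((0 : ℝ), (0 : ℝ)), ((1 : ℝ), (1 : ℝ))} ∪
          {q : ℝ × ℝ |
            (q.1 + q.2 - 1) ^ 2 / (1 + Real.cos α) +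
              (q.1 - q.2) ^ 2 / (1 - Real.cos α) ≤ 1 / 2}) := by
  obtain rfl : ψ₀ = ![(Real.cos 0 : ℂ), (Real.sin 0 : ℂ)] := by simpa using hψ₀
  subst hψ₁ hρ₀ hρ₁
  exact stmt10_general (Real.sin_pos_of_mem_Ioo hα).ne' (by rw [star_dotProduct_cos_sin]; simp)
    (by rw [star_dotProduct_cos_sin]; simp)
    (by rw [star_dotProduct_cos_sin, sub_zero, Complex.norm_real, Real.norm_eq_abs])
end

section
/- Let m ≥ 3, and for x ∈ {0, …, m−1} let ρ_x = |φ_x⟩⟨φ_x| be the qubit pure state with φ_x = (cos(πx/m), sin(πx/m))ᵀ. Then the set { p ∈ ℝ^m : p_x = Tr[ρ_x π_0] for some two-outcome POVM (π_0, π_1) on ℂ² } equals the convex hull of {0, u} ∪ E, where u ∈ ℝ^m is the all-ones vector, 0 the zero vector, and E := { p ∈ ℝ^m : ∃ a, b ∈ ℝ with a² + b² ≤ 1 and p_x = ½ + ½( a cos(2πx/m) + b sin(2πx/m) ) for all x }. -/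
open Matrix Finset
open scoped ComplexOrder

/-!
In dimension two the complement `1 - ρ` of a density matrix `ρ` is again a density matrix. An
effect `0 ≤ M ≤ 1` with `Tr M ≤ 1` lies on the segment from `0` to the density matrix `M / Tr M`;
if `Tr M ≥ 1` the same holds for `1 - M`, so `M` lies on a segment from `1` to a density matrix.
Hence the qubit effects are the convex hull of `0`, `1` and the density matrices. The real-linear
map `M ↦ (Re Tr[ρ_x M])_x` carries this to correlation vectors. When the `ρ_x` lie in a plane of
the Bloch ball, it sees a density matrix only through the projection of its Bloch vector to that
plane, which ranges over the unit disc.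
-/

/-- The density matrices (mixed quantum states): positive semidefinite matrices of trace one. -/
def densityMatrices (𝕜 n : Type*) [RCLike 𝕜] [Fintype n] : Set (Matrix n n 𝕜) :=
  {ρ | ρ.PosSemidef ∧ ρ.trace = 1}

section Effects

open scoped MatrixOrder

variable {𝕜 ι n : Type*} [RCLike 𝕜] [Fintype n]

theorem mem_convexHull_insert_zero_densityMatrices {M : Matrix n n 𝕜} (hM : M.PosSemidef)
    (htr : RCLike.re M.trace ≤ 1) : M ∈ convexHull ℝ (insert 0 (densityMatrices 𝕜 n)) := by
  have hsub := subset_convexHull ℝ (insert 0 (densityMatrices 𝕜 n))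
  obtain rfl | hne := eq_or_ne M 0
  · exact hsub (Set.mem_insert 0 _)
  obtain ⟨t, ht_nonneg, ht⟩ := RCLike.nonneg_iff_exists_ofReal.mp hM.trace_nonneg
  have ht_ne : (t : 𝕜) ≠ 0 := by rwa [ht, ne_eq, hM.trace_eq_zero_iff]
  have ht_le : t ≤ 1 := by rwa [← ht, RCLike.ofReal_re] at htr
  have hnormalized : t⁻¹ • M ∈ densityMatrices 𝕜 n := by
    refine ⟨hM.smul (inv_nonneg.mpr ht_nonneg), ?_⟩
    rw [trace_smul, ← ht, RCLike.real_smul_eq_coe_mul, RCLike.ofReal_inv, inv_mul_cancel₀ ht_ne]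
  rw [← smul_inv_smul₀ (RCLike.ofReal_ne_zero.mp ht_ne) M]
  exact (convex_convexHull ℝ _).smul_mem_of_zero_mem (hsub (Set.mem_insert 0 _))
    (hsub (Set.mem_insert_of_mem 0 hnormalized)) ⟨ht_nonneg, ht_le⟩

theorem trace_smul_self_fin_two {R : Type*} [CommRing R] [Nontrivial R]
    (M : Matrix (Fin 2) (Fin 2) R) : M.trace • M = M * M + M.det • 1 := by
  have cayley_hamilton := aeval_self_charpoly M
  simp only [charpoly_fin_two, map_add, map_sub, map_mul, map_pow, Polynomial.aeval_X,
    Polynomial.aeval_C, Algebra.algebraMap_eq_smul_one, smul_one_mul] at cayley_hamilton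
  rw [← sub_eq_zero, ← neg_eq_zero, ← cayley_hamilton, sq]
  abel

theorem posSemidef_fin_two_of_trace_pos {M : Matrix (Fin 2) (Fin 2) 𝕜} (hM : M.IsHermitian)
    (htr : 0 < M.trace) (hdet : 0 ≤ M.det) : M.PosSemidef := by
  have hsq : (M * M).PosSemidef := by simpa only [hM.eq] using posSemidef_conjTranspose_mul_self M
  rw [← inv_smul_smul₀ htr.ne' M, trace_smul_self_fin_two]
  exact (hsq.add (PosSemidef.one.smul hdet)).smul (inv_nonneg.mpr htr.le)

theorem one_sub_mem_densityMatrices {ρ : Matrix (Fin 2) (Fin 2) 𝕜}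
    (hρ : ρ ∈ densityMatrices 𝕜 (Fin 2)) : 1 - ρ ∈ densityMatrices 𝕜 (Fin 2) := by
  obtain ⟨hpos, htr⟩ := hρ
  have htr_sub : (1 - ρ).trace = 1 := by rw [trace_sub, htr, trace_one]; norm_num
  have hdet_sub : (1 - ρ).det = ρ.det := by
    rw [trace_fin_two] at htr
    simp only [det_fin_two, Matrix.sub_apply, one_apply_eq, one_apply_ne zero_ne_one,
      one_apply_ne one_ne_zero]
    linear_combination -htr
  exact ⟨posSemidef_fin_two_of_trace_pos (isHermitian_one.sub hpos.isHermitian)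
    (htr_sub ▸ one_pos) (hdet_sub ▸ hpos.det_nonneg), htr_sub⟩

theorem one_sub_mem_convexHull_insert_one_densityMatrices {M : Matrix (Fin 2) (Fin 2) 𝕜}
    (hM : M ∈ convexHull ℝ (insert 0 (densityMatrices 𝕜 (Fin 2)))) :
    1 - M ∈ convexHull ℝ (insert 1 (densityMatrices 𝕜 (Fin 2))) := by
  let complement := (AffineEquiv.constVSub ℝ (1 : Matrix (Fin 2) (Fin 2) 𝕜)).toAffineMap
  have hmaps : Set.MapsTo complement (insert 0 (densityMatrices 𝕜 (Fin 2)))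
      (insert 1 (densityMatrices 𝕜 (Fin 2))) := by
    rintro _ (rfl | hρ)
    · exact Or.inl (sub_zero 1)
    · exact Or.inr (one_sub_mem_densityMatrices hρ)
  refine convexHull_mono hmaps.image_subset ?_
  rw [← AffineMap.image_convexHull]
  exact Set.mem_image_of_mem complement hM

theorem Icc_zero_one_fin_two_eq_convexHull :
    Set.Icc (0 : Matrix (Fin 2) (Fin 2) 𝕜) 1 =
      convexHull ℝ ({0, 1} ∪ densityMatrices 𝕜 (Fin 2)) := by
  apply Set.Subset.antisymm
  · rintro M ⟨hM, hM_le⟩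
    obtain htr | htr := le_total (RCLike.re M.trace) 1
    · refine convexHull_mono ?_ (mem_convexHull_insert_zero_densityMatrices hM.posSemidef htr)
      exact Set.insert_subset (by simp) Set.subset_union_right
    · have htr_sub : RCLike.re (1 - M).trace ≤ 1 := by
        rw [trace_sub, trace_one, Fintype.card_fin, map_sub, RCLike.natCast_re, Nat.cast_ofNat]
        linarith
      have hM_mem := one_sub_mem_convexHull_insert_one_densityMatrices
        (mem_convexHull_insert_zero_densityMatrices hM_le htr_sub)
      rw [sub_sub_cancel] at hM_mem
      exact convexHull_mono (Set.insert_subset (by simp) Set.subset_union_right) hM_mem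
  · refine convexHull_min ?_ (convex_Icc 0 1)
    rintro _ ((rfl | rfl) | hρ)
    · exact Set.left_mem_Icc.mpr PosSemidef.one.nonneg
    · exact Set.right_mem_Icc.mpr PosSemidef.one.nonneg
    · exact ⟨hρ.1.nonneg, (one_sub_mem_densityMatrices hρ).1⟩

/-- The correlation vector `(Re Tr[ρ_x M])_x` of an effect `M` with a family of states `ρ_x`, as a
real-linear map defined on all matrices so that it transports convex hulls. -/
noncomputable def correlationMap (ρ : ι → Matrix n n 𝕜) : Matrix n n 𝕜 →ₗ[ℝ] ι → ℝ :=
  LinearMap.pi fun x => RCLike.reLm ∘ₗ traceLinearMap n ℝ 𝕜 ∘ₗ LinearMap.mulLeft ℝ (ρ x)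

theorem correlationMap_apply (ρ : ι → Matrix n n 𝕜) (M : Matrix n n 𝕜) (x : ι) :
    correlationMap ρ M x = RCLike.re (ρ x * M).trace :=
  rfl

theorem setOf_povm_correlation_eq_image [DecidableEq n] (ρ : ι → Matrix n n 𝕜) :
    {p : ι → ℝ | ∃ π₀ π₁ : Matrix n n 𝕜, π₀.PosSemidef ∧ π₁.PosSemidef ∧ π₀ + π₁ = 1 ∧
      ∀ x, p x = RCLike.re (ρ x * π₀).trace} = correlationMap ρ '' Set.Icc 0 1 := by
  ext p
  constructor
  · rintro ⟨π₀, π₁, hπ₀, hπ₁, hsum, hp⟩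
    exact ⟨π₀, ⟨hπ₀.nonneg, le_iff.mpr (eq_sub_of_add_eq' hsum ▸ hπ₁)⟩, funext fun x => (hp x).symm⟩
  · rintro ⟨M, ⟨hM, hM_le⟩, rfl⟩
    exact ⟨M, 1 - M, hM.posSemidef, hM_le, add_sub_cancel M 1, fun _ => rfl⟩

theorem setOf_povm_correlation_eq_convexHull (ρ : ι → Matrix (Fin 2) (Fin 2) 𝕜) :
    {p : ι → ℝ | ∃ π₀ π₁ : Matrix (Fin 2) (Fin 2) 𝕜,
      π₀.PosSemidef ∧ π₁.PosSemidef ∧ π₀ + π₁ = 1 ∧ ∀ x, p x = RCLike.re (ρ x * π₀).trace} =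
      convexHull ℝ ({0, correlationMap ρ 1} ∪ correlationMap ρ '' densityMatrices 𝕜 (Fin 2)) := by
  rw [setOf_povm_correlation_eq_image, Icc_zero_one_fin_two_eq_convexHull,
    LinearMap.image_convexHull, Set.image_union, Set.image_pair, map_zero]

end Effects

/-- The matrix `(1 + a σ_z + b σ_x) / 2`, whose Bloch vector `(b, 0, a)` lies in the plane of
real matrices; it is a qubit state when `a ^ 2 + b ^ 2 ≤ 1`. -/
noncomputable def planarBlochMatrix (a b : ℝ) : Matrix (Fin 2) (Fin 2) ℂ :=
  !![(1 + a) / 2, b / 2; b / 2, (1 - a) / 2]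

theorem trace_planarBlochMatrix (a b : ℝ) : (planarBlochMatrix a b).trace = 1 := by
  simp only [planarBlochMatrix, trace_fin_two_of]
  ring

theorem det_planarBlochMatrix (a b : ℝ) :
    (planarBlochMatrix a b).det = ((1 - (a ^ 2 + b ^ 2)) / 4 : ℝ) := by
  simp only [planarBlochMatrix, det_fin_two_of]
  push_cast
  ring

theorem isHermitian_planarBlochMatrix (a b : ℝ) : (planarBlochMatrix a b).IsHermitian := by
  ext i j
  fin_cases i <;> fin_cases j <;> simp [planarBlochMatrix]

theorem planarBlochMatrix_mem_densityMatrices {a b : ℝ} (hab : a ^ 2 + b ^ 2 ≤ 1) :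
    planarBlochMatrix a b ∈ densityMatrices ℂ (Fin 2) := by
  have hdet : 0 ≤ (planarBlochMatrix a b).det := by
    rw [det_planarBlochMatrix, Complex.zero_le_real]
    linarith
  exact ⟨posSemidef_fin_two_of_trace_pos (isHermitian_planarBlochMatrix a b)
    (trace_planarBlochMatrix a b ▸ one_pos) hdet, trace_planarBlochMatrix a b⟩

theorem re_trace_planarBlochMatrix_mul {M : Matrix (Fin 2) (Fin 2) ℂ} (hM : M.IsHermitian)
    (c d : ℝ) :
    (planarBlochMatrix c d * M).trace.re =
      M.trace.re / 2 + ((M 0 0 - M 1 1).re * c + (2 * M 0 1).re * d) / 2 := by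
  have hoffdiag : (M 1 0).re = (M 0 1).re := by rw [← hM.apply 0 1]; simp
  rw [planarBlochMatrix, eta_fin_two M, mul_fin_two, trace_fin_two_of, trace_fin_two_of]
  simp only [Complex.add_re, Complex.mul_re, Complex.sub_re, Complex.div_ofNat_re,
    Complex.div_ofNat_im, Complex.add_im, Complex.sub_im, Complex.one_re, Complex.one_im,
    Complex.ofReal_re, Complex.ofReal_im, Complex.re_ofNat, Complex.im_ofNat, of_apply, cons_val',
    cons_val_zero, cons_val_one, cons_val_fin_one, hoffdiag]
  ring

theorem sq_sub_diag_add_sq_offDiag_le_sq_trace {M : Matrix (Fin 2) (Fin 2) ℂ} (hM : M.PosSemidef) :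
    (M 0 0 - M 1 1).re ^ 2 + (2 * M 0 1).re ^ 2 ≤ M.trace.re ^ 2 := by
  have hdet : 0 ≤ M.det.re := (Complex.le_def.mp hM.det_nonneg).1
  have him : (M 0 0).im = 0 := (Complex.le_def.mp hM.diag_nonneg).2.symm
  rw [det_fin_two, ← hM.isHermitian.apply 1 0] at hdet
  have hoffdiag : (M 0 1).re ^ 2 ≤ (M 0 0).re * (M 1 1).re := by
    simp only [RCLike.star_def, Complex.sub_re, Complex.mul_re, him, zero_mul, sub_zero,
      Complex.conj_re, Complex.conj_im] at hdet
    nlinarith only [hdet, sq_nonneg (M 0 1).im]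
  simp only [trace_fin_two, Complex.sub_re, Complex.add_re, Complex.mul_re, Complex.re_ofNat,
    Complex.im_ofNat, zero_mul, sub_zero]
  linarith only [hoffdiag]

theorem correlationMap_planarBlochMatrix_image_densityMatrices {ι : Type*} (c d : ι → ℝ) :
    correlationMap (fun x => planarBlochMatrix (c x) (d x)) '' densityMatrices ℂ (Fin 2) =
      {p | ∃ a b : ℝ, a ^ 2 + b ^ 2 ≤ 1 ∧ ∀ x, p x = 1 / 2 + (a * c x + b * d x) / 2} := by
  ext p
  constructor
  · rintro ⟨σ, ⟨hpos, htr⟩, rfl⟩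
    refine ⟨(σ 0 0 - σ 1 1).re, (2 * σ 0 1).re, ?_, fun x => ?_⟩
    · simpa [htr] using sq_sub_diag_add_sq_offDiag_le_sq_trace hpos
    · rw [correlationMap_apply, RCLike.re_eq_complex_re,
        re_trace_planarBlochMatrix_mul hpos.isHermitian, htr, Complex.one_re]
  · rintro ⟨a, b, hab, hp⟩
    refine ⟨planarBlochMatrix a b, planarBlochMatrix_mem_densityMatrices hab, funext fun x => ?_⟩
    have hdiag : planarBlochMatrix a b 0 0 - planarBlochMatrix a b 1 1 = a := by
      change (1 + a : ℂ) / 2 - (1 - a) / 2 = a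
      ring
    have hoffdiag : 2 * planarBlochMatrix a b 0 1 = b := mul_div_cancel₀ _ two_ne_zero
    rw [hp x, correlationMap_apply, RCLike.re_eq_complex_re,
      re_trace_planarBlochMatrix_mul (isHermitian_planarBlochMatrix a b), trace_planarBlochMatrix,
      hdiag, hoffdiag, Complex.one_re, Complex.ofReal_re, Complex.ofReal_re]

theorem vecMulVec_cos_sin_star_eq_planarBlochMatrix (θ : ℝ) :
    vecMulVec ![(Real.cos θ : ℂ), (Real.sin θ : ℂ)]
      (star ![(Real.cos θ : ℂ), (Real.sin θ : ℂ)]) =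
      planarBlochMatrix (Real.cos (2 * θ)) (Real.sin (2 * θ)) := by
  have hpyth : (Real.cos θ : ℂ) ^ 2 + (Real.sin θ : ℂ) ^ 2 = 1 :=
    mod_cast Real.cos_sq_add_sin_sq θ
  rw [planarBlochMatrix, Real.cos_two_mul', Real.sin_two_mul, ← hpyth]
  ext i j
  fin_cases i <;> fin_cases j <;>
    simp only [Fin.zero_eta, Fin.mk_one, vecMulVec_apply, Pi.star_apply, Complex.star_def,
      Complex.conj_ofReal, of_apply, cons_val', cons_val_zero, cons_val_one, cons_val_fin_one,
      Complex.ofReal_sub, Complex.ofReal_mul, Complex.ofReal_pow, Complex.ofReal_ofNat] <;>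
    ring

theorem stmt15_general {ι : Type*} (c d : ι → ℝ) :
    {p : ι → ℝ | ∃ π₀ π₁ : Matrix (Fin 2) (Fin 2) ℂ,
        π₀.PosSemidef ∧ π₁.PosSemidef ∧ π₀ + π₁ = 1 ∧
        ∀ x, p x = ((planarBlochMatrix (c x) (d x) * π₀).trace).re} =
      convexHull ℝ
        ({0, 1} ∪ {p : ι → ℝ | ∃ a b : ℝ, a ^ 2 + b ^ 2 ≤ 1 ∧
          ∀ x, p x = 1 / 2 + (a * c x + b * d x) / 2}) := by
  have hone : correlationMap (fun x => planarBlochMatrix (c x) (d x)) 1 = 1 := by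
    ext x
    simp [correlationMap_apply, trace_planarBlochMatrix]
  rw [← correlationMap_planarBlochMatrix_image_densityMatrices, ← hone]
  exact setOf_povm_correlation_eq_convexHull _

/-- for the m pure states φ_x = (cos(πx/m), sin(πx/m))ᵀ uniformly
distributed on the Bloch equatorial plane, the set of correlation vectors
p_x = Tr[ρ_x π₀] over all two-outcome POVMs equals the convex hull of {0, u} and
the ellipse E = { p : p_x = ½ + ½(a cos(2πx/m) + b sin(2πx/m)), a² + b² ≤ 1 }. -/
theorem stmt15 (m : ℕ) (hm : 3 ≤ m)
    (φ : Fin m → Fin 2 → ℂ)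
    (hφ : ∀ x, φ x = ![(Real.cos (Real.pi * x / m) : ℂ), (Real.sin (Real.pi * x / m) : ℂ)])
    (ρ : Fin m → Matrix (Fin 2) (Fin 2) ℂ)
    (hρ : ∀ x, ρ x = Matrix.vecMulVec (φ x) (star (φ x)))
    (u : Fin m → ℝ) (hu : u = fun _ => 1) :
    {p : Fin m → ℝ | ∃ π₀ π₁ : Matrix (Fin 2) (Fin 2) ℂ,
        π₀.PosSemidef ∧ π₁.PosSemidef ∧ π₀ + π₁ = 1 ∧
        ∀ x, p x = ((ρ x * π₀).trace).re} =
      convexHull ℝ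
        ({0, u} ∪ {p : Fin m → ℝ | ∃ a b : ℝ, a ^ 2 + b ^ 2 ≤ 1 ∧
          ∀ x, p x = 1 / 2 +
            (a * Real.cos (2 * Real.pi * x / m) + b * Real.sin (2 * Real.pi * x / m)) / 2}) := by
  simp only [hρ, hφ, vecMulVec_cos_sin_star_eq_planarBlochMatrix, hu, mul_assoc, mul_div_assoc]
  exact stmt15_general _ _
end
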